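/- (Upper bound on the objective gap from the iterate optimality conditions.) Let f : ℝ^N → ℝ, S ⊆ ℝ^N, let C and D be real p×N matrices, E ∈ ℝ^p, and ρ > 0. Suppose x* ∈ ℝ^N and z* ∈ S satisfy C x* + D z* = E. Let z, z⁺ ∈ S, x⁺ ∈ ℝ^N, and y⁺ ∈ ℝ^p be such that: (a) x⁺ minimizes the function x ↦ f(x) + ⟨y⁺ − ρ D (z⁺ − z), C x⟩ over ℝ^N, and (b) z⁺ minimizes the function w ↦ ⟨y⁺, D w⟩ over S. Then with residual r⁺ = C x⁺ + D z⁺ − E, one has f(x⁺) − f(x*) ≤ −⟨y⁺, r⁺⟩ − ρ ⟨D (z⁺ − z), −r⁺ + D (z⁺ − z*)⟩. -/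

import Mathlib

open Matrix

/-- Upper bound on the objective gap from the iterate optimality conditions:
if `x⁺` minimizes `x ↦ f x + ⟨y⁺ − ρ D (z⁺ − z), C x⟩` over `ℝ^N` and `z⁺`
minimizes `w ↦ ⟨y⁺, D w⟩` over `S`, then with `r⁺ = C x⁺ + D z⁺ − E`,
`f x⁺ − f x* ≤ −⟨y⁺, r⁺⟩ − ρ ⟨D (z⁺ − z), −r⁺ + D (z⁺ − z*)⟩`. -/
theorem stmt_7 (N p : ℕ) (f : (Fin N → ℝ) → ℝ) (S : Set (Fin N → ℝ))
    (C D : Matrix (Fin p) (Fin N) ℝ) (E : Fin p → ℝ) (ρ : ℝ) (hρ : 0 < ρ)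
    (xstar : Fin N → ℝ) (zstar : Fin N → ℝ)
    (hzstar : zstar ∈ S)
    (hfeas : C.mulVec xstar + D.mulVec zstar = E)
    (z zplus : Fin N → ℝ) (hz : z ∈ S)
    (xplus : Fin N → ℝ) (yplus : Fin p → ℝ)
    (hx : ∀ x : Fin N → ℝ,
      f xplus + (yplus - ρ • D.mulVec (zplus - z)) ⬝ᵥ C.mulVec xplus ≤
        f x + (yplus - ρ • D.mulVec (zplus - z)) ⬝ᵥ C.mulVec x)
    (hzplus : zplus ∈ S ∧ ∀ w ∈ S, yplus ⬝ᵥ D.mulVec zplus ≤ yplus ⬝ᵥ D.mulVec w) :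
    f xplus - f xstar ≤
      -(yplus ⬝ᵥ (C.mulVec xplus + D.mulVec zplus - E)) -
        ρ * (D.mulVec (zplus - z) ⬝ᵥ
          (-(C.mulVec xplus + D.mulVec zplus - E) + D.mulVec (zplus - zstar))) := by
  have h1 := hx xstar
  have h2 := hzplus.2 zstar hzstar
  subst hfeas
  rw [Matrix.mulVec_sub D zplus zstar]
  generalize D.mulVec (zplus - z) = d at *
  simp only [sub_dotProduct, smul_dotProduct, dotProduct_sub, dotProduct_add, dotProduct_neg,
    smul_eq_mul] at *
  linarith
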